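/- The group P₂ generated by diag(i,1), diag(j,1), and (1/2)·[[1+j, −1+j], [−1+j, 1+j]] has order 1920, and the group P₃ generated by diag(i,1), diag(j,1), and (1/√2)·[[1,1],[1,−1]] has order 3840. -/

import Mathlib

noncomputable section
open Quaternion Matrix

abbrev HQ := ℍ[ℝ]
def qi : HQ := ⟨0,1,0,0⟩
def qj : HQ := ⟨0,0,1,0⟩
def qk : HQ := ⟨0,0,0,1⟩

/-- Inner product on the right ℍ-module ℍ^d. -/
def inprod {d : ℕ} (v w : Fin d → HQ) : HQ := ∑ m, star (v m) * w m

/-!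
The matrices `diag(1, -1)` and `[[0, q], [q̄, 0]]` with `q = 1, i, j, k` are five pairwise
anticommuting involutions with product `-1`, and only `±1` commutes with all of them. Conjugation by
each generator permutes these five up to sign, which gives a homomorphism from `P₂` and `P₃` to
`S₅`. An element fixing each of the five up to sign is determined, up to `±1`, by its signs, whose
product is `1` because `-1` is fixed; so the kernel has order at most `2 · 2⁴`, and the five
involutions, which lie in both groups, generate a group of exactly this order. The images are `A₅`
and `S₅`, so the orders are `32 · 60 = 1920` and `32 · 120 = 3840`.
-/

section SubdirectProduct

variable {G H M : Type*} [Group G] [Group H] [Monoid M]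

theorem card_map_fst_of_goursatSnd_eq_bot (K : Subgroup (G × H)) (hK : K.goursatSnd = ⊥) :
    Nat.card (K.map (MonoidHom.fst G H)) =
      Nat.card K.goursatFst * Nat.card (K.map (MonoidHom.snd G H)) := by
  have hfst : Function.Injective ((MonoidHom.fst G H).domRestrict K) := by
    rw [injective_iff_map_eq_one]
    rintro ⟨⟨g, h⟩, hgh⟩ (rfl : g = 1)
    obtain rfl : h = 1 := by simpa [hK] using Subgroup.mem_goursatSnd.mpr hgh
    rfl
  have hker : Nat.card K.goursatFst = Nat.card ((MonoidHom.snd G H).domRestrict K).ker :=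
    Subgroup.card_map_of_injective hfst
  rw [hker, ← MonoidHom.domRestrict_range, ← MonoidHom.domRestrict_range, ← Subgroup.index_ker,
    ← Subgroup.index_ker, Subgroup.card_mul_index, (MonoidHom.ker_eq_bot_iff _).mpr hfst,
    Subgroup.index_bot]

theorem conj_mem_goursatFst {K : Subgroup (G × H)} {k : G × H} {g : G} (hk : k ∈ K)
    (hg : g ∈ K.goursatFst) : k.1 * g * k.1⁻¹ ∈ K.goursatFst := by
  rw [Subgroup.mem_goursatFst] at hg ⊢
  have h := mul_mem (mul_mem hk hg) (inv_mem hk)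
  rwa [show k * (g, 1) * k⁻¹ = (k.1 * g * k.1⁻¹, 1) by ext <;> simp] at h

theorem card_submonoid_closure_image {f : G →* M} (hf : Function.Injective f) {s : Set G}
    (hs : ∀ g ∈ s, IsOfFinOrder g) :
    Nat.card (Submonoid.closure (f '' s)) = Nat.card (Subgroup.closure s) := by
  rw [← MonoidHom.map_mclosure, ← Subgroup.closure_toSubmonoid_of_isOfFinOrder hs]
  exact Nat.card_congr ((Subgroup.closure s).toSubmonoid.equivMapOfInjective f hf).toEquiv.symm

end SubdirectProduct

section SignHom

variable {M : Type*} [Monoid M] [HasDistribNeg M]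

theorem mul_mul_self_eq_neg_one {x y : M} (hx : x * x = 1) (hy : y * y = 1)
    (hxy : x * y = -(y * x)) : x * y * (x * y) = -1 := by
  nth_rw 2 [hxy]
  rw [mul_neg, mul_assoc, ← mul_assoc y, hy, one_mul, hx]

variable (M) in
/-- The homomorphism `ℤˣ →* M` sending `-1` to `-1`. -/
def intUnitsHom : ℤˣ →* M where
  toFun ε := if ε = 1 then 1 else -1
  map_one' := by simp
  map_mul' ε δ := by
    rcases Int.units_eq_one_or ε with rfl | rfl <;> rcases Int.units_eq_one_or δ with rfl | rfl <;>
      simp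

@[simp] theorem intUnitsHom_neg_one : intUnitsHom M (-1) = -1 := by
  simp [intUnitsHom]

theorem intUnitsHom_injective (hM : (1 : M) ≠ -1) : Function.Injective (intUnitsHom M) := by
  rw [injective_iff_map_eq_one]
  intro ε hε
  rcases Int.units_eq_one_or ε with rfl | rfl
  · rfl
  · exact absurd (by simpa using hε.symm) hM

theorem commute_intUnitsHom (g : M) (ε : ℤˣ) : Commute g (intUnitsHom M ε) := by
  rcases Int.units_eq_one_or ε with rfl | rfl
  · simp
  · simp

theorem semiconjBy_intUnitsHom_mul {g h x y z : M} {ε δ : ℤˣ}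
    (hg : SemiconjBy g y (intUnitsHom M δ * z)) (hh : SemiconjBy h x (intUnitsHom M ε * y)) :
    SemiconjBy (g * h) x (intUnitsHom M (ε * δ) * z) := by
  rw [map_mul, mul_assoc]
  exact ((commute_intUnitsHom g ε).semiconjBy.mul_right hg).mul_left hh

theorem semiconjBy_intUnitsHom_inv {G : Type*} [Group G] [HasDistribNeg G] {g x y : G} {ε : ℤˣ}
    (hg : SemiconjBy g x (intUnitsHom G ε * y)) : SemiconjBy g⁻¹ y (intUnitsHom G ε * x) := by
  have h : SemiconjBy g⁻¹ (intUnitsHom G ε * (intUnitsHom G ε * y)) (intUnitsHom G ε * x) :=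
    ((commute_intUnitsHom _ _).semiconjBy).mul_right hg.inv_symm_left
  rwa [← mul_assoc, ← map_mul, Int.units_mul_self, map_one, one_mul] at h

theorem semiconjBy_intUnitsHom_list_prod {ι : Type*} {g : M} {γ : ι → M} {ε : ι → ℤˣ}
    (h : ∀ i, SemiconjBy g (γ i) (intUnitsHom M (ε i) * γ i)) (l : List ι) :
    SemiconjBy g (l.map γ).prod (intUnitsHom M (l.map ε).prod * (l.map γ).prod) := by
  induction l with
  | nil => simp
  | cons i l ih =>
    simp only [List.map_cons, List.prod_cons, map_mul]
    rw [mul_assoc, ← mul_assoc _ (γ i), ← (commute_intUnitsHom (γ i) _).eq, mul_assoc, ← mul_assoc]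
    exact (h i).mul_right ih

end SignHom

section SignedPermutations

variable {G ι : Type*} [Group G] [HasDistribNeg G]

/-- The pairs `(g, σ)` such that conjugation by `g` takes each `γ i` to `±γ (σ i)`. It is kept as a
relation because `g` need not determine `σ` for an arbitrary family `γ`. -/
def signedPermGraph (γ : ι → G) : Subgroup (G × Equiv.Perm ι) where
  carrier := {p | ∀ i, ∃ ε, SemiconjBy p.1 (γ i) (intUnitsHom G ε * γ (p.2 i))}
  one_mem' i := ⟨1, by simp⟩
  mul_mem' {p q} hp hq i := by
    obtain ⟨ε, hε⟩ := hq i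
    obtain ⟨δ, hδ⟩ := hp (q.2 i)
    exact ⟨ε * δ, semiconjBy_intUnitsHom_mul hδ hε⟩
  inv_mem' {p} hp i := by
    obtain ⟨ε, hε⟩ := hp (p.2⁻¹ i)
    exact ⟨ε, semiconjBy_intUnitsHom_inv (by simpa using hε)⟩

/-- The pairs `(g, ε)` such that conjugation by `g` multiplies each `γ i` by the sign `ε i`. -/
def signGraph (γ : ι → G) : Subgroup (G × (ι → ℤˣ)) where
  carrier := {p | ∀ i, SemiconjBy p.1 (γ i) (intUnitsHom G (p.2 i) * γ i)}
  one_mem' i := by simp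
  mul_mem' {p q} hp hq i := by
    simpa [mul_comm] using semiconjBy_intUnitsHom_mul (hp i) (hq i)
  inv_mem' {p} hp i := by
    simpa using semiconjBy_intUnitsHom_inv (hp i)

theorem mem_signedPermGraph {γ : ι → G} {g : G} {σ : Equiv.Perm ι}
    (h : ∀ i, SemiconjBy g (γ i) (γ (σ i)) ∨ SemiconjBy g (γ i) (-γ (σ i))) :
    (g, σ) ∈ signedPermGraph γ :=
  fun i ↦ (h i).elim (fun h ↦ ⟨1, by simpa using h⟩) fun h ↦ ⟨-1, by simpa using h⟩

theorem mem_goursatFst_signedPermGraph {γ : ι → G} {g : G} :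
    g ∈ (signedPermGraph γ).goursatFst ↔ ∃ ε, (g, ε) ∈ signGraph γ := by
  rw [Subgroup.mem_goursatFst]
  exact Classical.skolem

theorem goursatSnd_signGraph (hG : (1 : G) ≠ -1) (γ : ι → G) :
    (signGraph γ).goursatSnd = ⊥ := by
  rw [eq_bot_iff]
  intro ε hε
  ext1 i
  have h : SemiconjBy 1 (γ i) (intUnitsHom G (ε i) * γ i) := Subgroup.mem_goursatSnd.mp hε i
  apply intUnitsHom_injective hG
  simpa using h.eq

end SignedPermutations

section SignPatterns

variable {ι : Type*} [Fintype ι]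

/-- The homomorphism sending a sign pattern to the product of its signs. -/
def prodSigns (ι : Type*) [Fintype ι] : (ι → ℤˣ) →* ℤˣ where
  toFun ε := ∏ i, ε i
  map_one' := Finset.prod_const_one
  map_mul' _ _ := Finset.prod_mul_distrib

theorem card_ker_prodSigns [Nonempty ι] :
    Nat.card (prodSigns ι).ker * 2 = 2 ^ Fintype.card ι := by
  classical
  have hsurj : Function.Surjective (prodSigns ι) := fun ε ↦
    ⟨Pi.mulSingle (Classical.arbitrary ι) ε,
      (Finset.prod_pi_mulSingle' _ _ _).trans (by simp)⟩
  have hcard := (prodSigns ι).ker.card_mul_index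
  rw [Subgroup.index_ker, MonoidHom.range_eq_top.mpr hsurj, Subgroup.card_top] at hcard
  simpa using hcard

variable [DecidableEq ι]

/-- The sign pattern equal to `1` at `i` and `-1` elsewhere. It records how conjugation by one of
several pairwise anticommuting involutions acts on them. -/
def flipOthers (i : ι) : ι → ℤˣ := fun j ↦ if j = i then 1 else -1

theorem ker_prodSigns_le_closure_flipOthers :
    (prodSigns ι).ker ≤ Subgroup.closure (Set.range flipOthers) := by
  intro ε (hε : ∏ i, ε i = 1)
  have hdecomp : ε = ∏ i, if ε i = 1 then 1 else flipOthers i := by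
    ext1 j
    have hterm (i : ι) : (if ε i = 1 then 1 else flipOthers i) j
        = ε i * if j = i then ε i else 1 := by
      rcases Int.units_eq_one_or (ε i) with h | h <;> by_cases hij : j = i <;>
        simp [h, hij, flipOthers]
    simp_rw [Finset.prod_apply, hterm, Finset.prod_mul_distrib, hε, Finset.prod_ite_eq]
    simp
  rw [hdecomp]
  refine prod_mem fun i _ ↦ ?_
  split_ifs
  · exact one_mem _
  · exact Subgroup.subset_closure ⟨i, rfl⟩

end SignPatterns

/-- `n` pairwise anticommuting involutions of a group, with ordered product `-1` and with
centralizer `{1, -1}`, like the generators of a Clifford algebra. -/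
structure IsCliffordFrame {G : Type*} [Group G] [HasDistribNeg G] {n : ℕ} (γ : Fin n → G) :
    Prop where
  one_ne_neg_one : (1 : G) ≠ -1
  mul_self : ∀ i, γ i * γ i = 1
  anticomm : Pairwise fun i j ↦ γ i * γ j = -(γ j * γ i)
  prod_ofFn : (List.ofFn γ).prod = -1
  eq_of_commute : ∀ g, (∀ i, Commute g (γ i)) → g = 1 ∨ g = -1

namespace IsCliffordFrame

variable {G : Type*} [Group G] [HasDistribNeg G] {n : ℕ} {γ : Fin n → G}

theorem eq_of_eq_intUnitsHom_mul (hγ : IsCliffordFrame γ) {i j : Fin n} {ε : ℤˣ}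
    (h : γ i = intUnitsHom G ε * γ j) : i = j := by
  by_contra hij
  have hleft : γ i * γ j = intUnitsHom G ε := by rw [h, mul_assoc, hγ.mul_self, mul_one]
  have hright : γ j * γ i = intUnitsHom G ε := by
    rw [h, (commute_intUnitsHom _ _).left_comm, hγ.mul_self, mul_one]
  have hneg : γ i * γ j = -(γ j * γ i) := hγ.anticomm hij
  rw [hleft, hright] at hneg
  exact hγ.one_ne_neg_one (mul_left_cancel (a := intUnitsHom G ε) (by simpa using hneg))

theorem goursatSnd_signedPermGraph (hγ : IsCliffordFrame γ) :
    (signedPermGraph γ).goursatSnd = ⊥ := by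
  rw [eq_bot_iff]
  intro σ hσ
  ext1 i
  obtain ⟨ε, hε⟩ := Subgroup.mem_goursatSnd.mp hσ i
  exact (hγ.eq_of_eq_intUnitsHom_mul (by simpa using hε.eq)).symm

theorem neg_one_mem_closure (hγ : IsCliffordFrame γ) : -1 ∈ Subgroup.closure (Set.range γ) := by
  rw [← hγ.prod_ofFn]
  refine list_prod_mem fun g hg ↦ Subgroup.subset_closure ?_
  simpa using hg

theorem flipOthers_mem_signGraph (hγ : IsCliffordFrame γ) (i : Fin n) :
    (γ i, flipOthers i) ∈ signGraph γ := by
  intro j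
  by_cases hij : j = i
  · simp [hij, flipOthers, SemiconjBy]
  · simpa [hij, flipOthers, SemiconjBy] using hγ.anticomm (Ne.symm hij)

theorem map_snd_signGraph_le (hγ : IsCliffordFrame γ) :
    (signGraph γ).map (MonoidHom.snd G _) ≤ (prodSigns (Fin n)).ker := by
  rintro _ ⟨⟨g, ε⟩, hg, rfl⟩
  have h := semiconjBy_intUnitsHom_list_prod hg (List.finRange n)
  rw [← List.ofFn_eq_map, hγ.prod_ofFn] at h
  apply intUnitsHom_injective hγ.one_ne_neg_one
  simpa [SemiconjBy, prodSigns, Fin.prod_univ_def, eq_comm] using h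

theorem ker_prodSigns_le_map_snd (hγ : IsCliffordFrame γ) :
    (prodSigns (Fin n)).ker ≤
      (signGraph γ ⊓ (Subgroup.closure (Set.range γ)).prod ⊤).map (MonoidHom.snd G _) := by
  refine ker_prodSigns_le_closure_flipOthers.trans ?_
  rw [Subgroup.closure_le]
  rintro _ ⟨i, rfl⟩
  exact ⟨(γ i, flipOthers i), ⟨hγ.flipOthers_mem_signGraph i,
    Subgroup.subset_closure ⟨i, rfl⟩, trivial⟩, rfl⟩

theorem map_snd_signGraph (hγ : IsCliffordFrame γ) :
    (signGraph γ).map (MonoidHom.snd G _) = (prodSigns (Fin n)).ker :=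
  hγ.map_snd_signGraph_le.antisymm
    (hγ.ker_prodSigns_le_map_snd.trans (Subgroup.map_mono inf_le_left))

theorem coe_goursatFst_signGraph (hγ : IsCliffordFrame γ) :
    ((signGraph γ).goursatFst : Set G) = {1, -1} := by
  ext g
  rw [SetLike.mem_coe, Subgroup.mem_goursatFst]
  constructor
  · intro hg
    exact hγ.eq_of_commute g fun i ↦ by simpa [Commute] using hg i
  · rintro (rfl | rfl) i
    · simp
    · simp [SemiconjBy]

theorem map_fst_signGraph (hγ : IsCliffordFrame γ) :
    (signGraph γ).map (MonoidHom.fst G _) = Subgroup.closure (Set.range γ) := by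
  apply le_antisymm
  · rintro _ ⟨⟨g, ε⟩, hg, rfl⟩
    obtain ⟨⟨h, _⟩, ⟨hh, hhγ, -⟩, rfl⟩ :=
      hγ.ker_prodSigns_le_map_snd (hγ.map_snd_signGraph_le ⟨_, hg, rfl⟩)
    have hquot : g * h⁻¹ ∈ (signGraph γ).goursatFst := by
      rw [Subgroup.mem_goursatFst]
      simpa using mul_mem hg (inv_mem hh)
    have hquotγ : g * h⁻¹ ∈ Subgroup.closure (Set.range γ) := by
      rw [← SetLike.mem_coe, hγ.coe_goursatFst_signGraph] at hquot
      rcases hquot with h1 | h1 <;> rw [h1]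
      exacts [one_mem _, hγ.neg_one_mem_closure]
    simpa using mul_mem hquotγ hhγ
  · rw [Subgroup.closure_le]
    rintro _ ⟨i, rfl⟩
    exact ⟨_, hγ.flipOthers_mem_signGraph i, rfl⟩

theorem card_closure (hγ : IsCliffordFrame γ) :
    Nat.card (Subgroup.closure (Set.range γ)) = 2 ^ n := by
  have : Nonempty (Fin n) := by
    refine Fin.pos_iff_nonempty.mp (Nat.pos_of_ne_zero ?_)
    rintro rfl
    exact hγ.one_ne_neg_one (by simpa using hγ.prod_ofFn)
  have hcenter : Nat.card (signGraph γ).goursatFst = 2 :=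
    (congrArg Set.ncard hγ.coe_goursatFst_signGraph).trans (Set.ncard_pair hγ.one_ne_neg_one)
  rw [← hγ.map_fst_signGraph,
    card_map_fst_of_goursatSnd_eq_bot _ (goursatSnd_signGraph hγ.one_ne_neg_one γ),
    hγ.map_snd_signGraph, hcenter, mul_comm, card_ker_prodSigns, Fintype.card_fin]

theorem goursatFst_signedPermGraph (hγ : IsCliffordFrame γ) :
    (signedPermGraph γ).goursatFst = Subgroup.closure (Set.range γ) := by
  ext g
  rw [mem_goursatFst_signedPermGraph, ← hγ.map_fst_signGraph]
  simp

theorem isOfFinOrder_of_mem (hγ : IsCliffordFrame γ) {p : G × Equiv.Perm (Fin n)}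
    (hp : p ∈ signedPermGraph γ) : IsOfFinOrder p.1 := by
  have hcard := card_map_fst_of_goursatSnd_eq_bot _ hγ.goursatSnd_signedPermGraph
  rw [hγ.goursatFst_signedPermGraph, hγ.card_closure] at hcard
  have : Finite ((signedPermGraph γ).map (MonoidHom.fst G _)) :=
    Nat.finite_of_card_ne_zero (hcard ▸ mul_ne_zero (by positivity) Nat.card_pos.ne')
  exact Submonoid.isOfFinOrder_coe.mpr
    (isOfFinOrder_of_finite (⟨p.1, p, hp, rfl⟩ : (signedPermGraph γ).map (MonoidHom.fst G _)))

theorem card_submonoid_closure {M : Type*} [Monoid M] (hγ : IsCliffordFrame γ) {f : G →* M}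
    (hf : Function.Injective f) {s : Set (G × Equiv.Perm (Fin n))}
    (hs : s ⊆ signedPermGraph γ) (hs' : Set.range γ ⊆ (Subgroup.closure s).goursatFst) :
    Nat.card (Submonoid.closure (f '' (Prod.fst '' s))) =
      2 ^ n * Nat.card (Subgroup.closure (Prod.snd '' s)) := by
  have hle : Subgroup.closure s ≤ signedPermGraph γ := (Subgroup.closure_le _).mpr hs
  have hsnd : (Subgroup.closure s).goursatSnd = ⊥ := by
    rw [eq_bot_iff, ← hγ.goursatSnd_signedPermGraph]
    intro σ hσ
    exact Subgroup.mem_goursatSnd.mpr (hle (Subgroup.mem_goursatSnd.mp hσ))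
  have hfst : (Subgroup.closure s).goursatFst = Subgroup.closure (Set.range γ) := by
    refine le_antisymm ?_ ((Subgroup.closure_le _).mpr hs')
    rw [← hγ.goursatFst_signedPermGraph]
    intro g hg
    exact Subgroup.mem_goursatFst.mpr (hle (Subgroup.mem_goursatFst.mp hg))
  have hcard := card_map_fst_of_goursatSnd_eq_bot _ hsnd
  rw [hfst, hγ.card_closure, MonoidHom.map_closure, MonoidHom.map_closure] at hcard
  rw [card_submonoid_closure_image hf]
  · exact hcard
  · rintro _ ⟨p, hp, rfl⟩
    exact hγ.isOfFinOrder_of_mem (hs hp)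

end IsCliffordFrame

section FivePoints

open Equiv

theorem isPreprimitive_of_prime_card_of_mem {α : Type*} (hα : (Nat.card α).Prime)
    {P : Subgroup (Perm α)} {c : Perm α} (hc : c ∈ P) (x : α)
    (hx : ∀ y, ∃ k : ℕ, (c ^ k) x = y) : MulAction.IsPreprimitive P α := by
  have : MulAction.IsPretransitive P α := by
    rw [MulAction.isPretransitive_iff_base x]
    intro y
    obtain ⟨k, rfl⟩ := hx y
    exact ⟨⟨c ^ k, pow_mem hc k⟩, rfl⟩
  exact .of_prime_card hα

theorem closure_swaps_eq_alternatingGroup :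
    Subgroup.closure {swap 1 2 * swap 3 4, swap 1 3 * swap 2 4, swap 0 3 * swap 2 4} =
      alternatingGroup (Fin 5) := by
  set P : Subgroup (Perm (Fin 5)) :=
    Subgroup.closure {swap 1 2 * swap 3 4, swap 1 3 * swap 2 4, swap 0 3 * swap 2 4} with hP
  have hσ : swap 1 2 * swap 3 4 ∈ P := Subgroup.subset_closure (by simp)
  have hτ : swap 1 3 * swap 2 4 ∈ P := Subgroup.subset_closure (by simp)
  have hρ : swap 0 3 * swap 2 4 ∈ P := Subgroup.subset_closure (by simp)
  apply le_antisymm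
  · rw [hP, Subgroup.closure_le]
    rintro _ (rfl | rfl | rfl) <;> exact Perm.mem_alternatingGroup.mpr (by decide)
  · have hcycle : ∀ y, ∃ k < 5,
        ((swap 0 3 * swap 2 4 * (swap 1 2 * swap 3 4) : Perm (Fin 5)) ^ k) 0 = y := by decide
    have hprim : MulAction.IsPreprimitive P (Fin 5) :=
      isPreprimitive_of_prime_card_of_mem (by norm_num) (mul_mem hρ hσ) 0
        fun y ↦ (hcycle y).imp fun _ ↦ And.right
    have hthree : (swap 0 3 * swap 2 4 * (swap 1 3 * swap 2 4) : Perm (Fin 5)).IsThreeCycle :=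
      card_support_eq_three_iff.mp (by decide)
    exact Perm.alternatingGroup_le_of_isPreprimitive_of_isThreeCycle_mem hprim hthree
      (mul_mem hρ hτ)

theorem closure_swaps_eq_top :
    Subgroup.closure {swap 1 2 * swap 3 4, swap 1 3 * swap 2 4, swap 0 (1 : Fin 5)} = ⊤ := by
  set P := Subgroup.closure {swap 1 2 * swap 3 4, swap 1 3 * swap 2 4, swap 0 (1 : Fin 5)}
  have hσ : swap 1 2 * swap 3 4 ∈ P := Subgroup.subset_closure (by simp)
  have hτ : swap 1 3 * swap 2 4 ∈ P := Subgroup.subset_closure (by simp)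
  have hρ : swap 0 1 ∈ P := Subgroup.subset_closure (by simp)
  have hcycle : ∀ y, ∃ k < 5, ((swap 0 1 * (swap 1 2 * swap 3 4) * (swap 0 1 *
      (swap 1 3 * swap 2 4)) : Perm (Fin 5)) ^ k) 0 = y := by decide
  have hprim : MulAction.IsPreprimitive P (Fin 5) :=
    isPreprimitive_of_prime_card_of_mem (by norm_num) (mul_mem (mul_mem hρ hσ) (mul_mem hρ hτ)) 0
      fun y ↦ (hcycle y).imp fun _ ↦ And.right
  exact Perm.subgroup_eq_top_of_isPreprimitive_of_isSwap_mem hprim (swap 0 1)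
    ⟨0, 1, by decide, rfl⟩ hρ

end FivePoints

section QuaternionUnits

@[simp] theorem re_qi : qi.re = 0 := rfl
@[simp] theorem imI_qi : qi.imI = 1 := rfl
@[simp] theorem imJ_qi : qi.imJ = 0 := rfl
@[simp] theorem imK_qi : qi.imK = 0 := rfl
@[simp] theorem re_qj : qj.re = 0 := rfl
@[simp] theorem imI_qj : qj.imI = 0 := rfl
@[simp] theorem imJ_qj : qj.imJ = 1 := rfl
@[simp] theorem imK_qj : qj.imK = 0 := rfl

/-- `qi` as an element of the group of unit quaternions. -/
def unitI : unitary HQ :=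
  ⟨qi, Unitary.mem_iff.mpr ⟨by ext <;> simp, by ext <;> simp⟩⟩

/-- `qj` as an element of the group of unit quaternions. -/
def unitJ : unitary HQ :=
  ⟨qj, Unitary.mem_iff.mpr ⟨by ext <;> simp, by ext <;> simp⟩⟩

theorem unitI_mul_self : unitI * unitI = -1 := by
  ext <;> simp [unitI, Unitary.coe_neg]

theorem unitJ_mul_self : unitJ * unitJ = -1 := by
  ext <;> simp [unitJ, Unitary.coe_neg]

theorem unitJ_mul_unitI : unitJ * unitI = -(unitI * unitJ) := by
  ext <;> simp [unitI, unitJ, Unitary.coe_neg]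

theorem star_unitI : star unitI = -unitI := by
  ext <;> simp [unitI, Unitary.coe_neg]

theorem star_unitJ : star unitJ = -unitJ := by
  ext <;> simp [unitJ, Unitary.coe_neg]

theorem star_unitI_mul_unitJ : star (unitI * unitJ) = -(unitI * unitJ) := by
  ext <;> simp [unitI, unitJ, Unitary.coe_neg]

/-- The standard real basis `1, i, j, k` of the quaternions, made of unit quaternions. -/
def unitBasis : Fin 4 → unitary HQ :=
  ![1, unitI, unitJ, unitI * unitJ]

theorem inner_unitBasis {m n : Fin 4} (h : m ≠ n) :
    inner ℝ (unitBasis m : HQ) (unitBasis n) = 0 := by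
  revert h
  fin_cases m <;> fin_cases n <;> simp [unitBasis, Quaternion.inner_def, unitI, unitJ]

theorem eq_coe_re_of_commute {a : HQ} (hi : Commute a qi) (hj : Commute a qj) : a = a.re := by
  have hk : -a.imK = a.imK := by
    simpa using (congrArg (fun q : HQ ↦ q.imJ) hi.eq).symm
  have hJ : -a.imJ = a.imJ := by
    simpa using congrArg (fun q : HQ ↦ q.imK) hi.eq
  have hI : -a.imI = a.imI := by
    simpa using (congrArg (fun q : HQ ↦ q.imK) hj.eq).symm
  ext <;> simp [neg_eq_self.mp hI, neg_eq_self.mp hJ, neg_eq_self.mp hk]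

theorem re_star_mul (p q : HQ) : (star p * q).re = inner ℝ p q := by
  simp [Quaternion.inner_def]

end QuaternionUnits

/-- The compact symplectic group `Sp(2)`: the `2 × 2` quaternionic matrices whose conjugate
transpose is their inverse. All matrices of the argument live in this group. -/
abbrev Sp2 := unitary (Matrix (Fin 2) (Fin 2) HQ)

namespace Sp2

/-- The embedding `u ↦ diag(u, 1)` of the unit quaternions into `Sp(2)`. -/
def diagLeft : unitary HQ →* Sp2 where
  toFun u := ⟨!![u, 0; 0, 1], Unitary.mem_iff.mpr (by
    constructor <;> ext1 i j <;> fin_cases i <;> fin_cases j <;> simp [Matrix.mul_apply])⟩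
  map_one' := Subtype.ext Matrix.one_fin_two.symm
  map_mul' u v := Subtype.ext (by simp)

/-- The matrix `[[0, q], [q̄, 0]]`, a quaternionic analogue of the Pauli matrices `X` and `Y`. -/
def offDiag (q : unitary HQ) : Sp2 :=
  ⟨!![0, q; star q, 0], Unitary.mem_iff.mpr (by
    constructor <;> ext1 i j <;> fin_cases i <;> fin_cases j <;> simp [Matrix.mul_apply])⟩

/-- The Pauli matrix `Z = diag(1, -1)`. -/
def pauliZ : Sp2 :=
  ⟨!![1, 0; 0, -1], Unitary.mem_iff.mpr (by
    constructor <;> ext1 i j <;> fin_cases i <;> fin_cases j <;> simp [Matrix.mul_apply])⟩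

theorem inv_sqrt_two_mul_self : (√2)⁻¹ * (√2)⁻¹ = (2⁻¹ : ℝ) := by
  rw [← mul_inv, Real.mul_self_sqrt zero_le_two]

theorem inv_sqrt_two_mul_self_add : (√2)⁻¹ * (√2)⁻¹ + (√2)⁻¹ * (√2)⁻¹ = (1 : ℝ) := by
  rw [inv_sqrt_two_mul_self]
  norm_num

/-- The Hadamard matrix `(1/√2) [[1, 1], [1, -1]]`, the third generator of `P₃`. Its conjugate of
`diag(j, 1)` is the third generator of `P₂`. -/
def hadamard : Sp2 :=
  ⟨(√2)⁻¹ • !![1, 1; 1, -1], Unitary.mem_iff.mpr (by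
    constructor <;> ext1 i j <;> fin_cases i <;> fin_cases j <;>
      simp [Matrix.mul_apply, smul_smul, inv_sqrt_two_mul_self_add, ← add_smul])⟩

theorem pauliZ_mul_self : pauliZ * pauliZ = 1 :=
  Subtype.ext (by simp [pauliZ, Matrix.one_fin_two])

theorem offDiag_mul_self (q : unitary HQ) : offDiag q * offDiag q = 1 :=
  Subtype.ext (by simp [offDiag, Matrix.one_fin_two])

theorem pauliZ_mul_offDiag (q : unitary HQ) : pauliZ * offDiag q = -(offDiag q * pauliZ) :=
  Subtype.ext (by simp [offDiag, pauliZ, Unitary.coe_neg])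

theorem offDiag_neg (q : unitary HQ) : offDiag (-q) = -offDiag q :=
  Subtype.ext (by simp [offDiag, Unitary.coe_neg])

theorem semiconjBy_diagLeft_offDiag (u q : unitary HQ) :
    SemiconjBy (diagLeft u) (offDiag q) (offDiag (u * q)) :=
  Subtype.ext (by simp [offDiag, diagLeft, mul_assoc])

theorem commute_diagLeft_pauliZ (u : unitary HQ) : Commute (diagLeft u) pauliZ :=
  Subtype.ext (by simp [pauliZ, diagLeft])

theorem diagLeft_neg_one : diagLeft (-1) = -pauliZ :=
  Subtype.ext (by simp [pauliZ, diagLeft, Unitary.coe_neg])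

theorem hadamard_mul_self : hadamard * hadamard = 1 :=
  Subtype.ext (by
    simp [hadamard, Matrix.one_fin_two, smul_smul, inv_sqrt_two_mul_self_add, ← add_smul])

theorem semiconjBy_hadamard_pauliZ : SemiconjBy hadamard pauliZ (offDiag 1) :=
  Subtype.ext (by simp [hadamard, pauliZ, offDiag])

theorem semiconjBy_hadamard_offDiag {q : unitary HQ} (hq : star q = -q) :
    SemiconjBy hadamard (offDiag q) (-offDiag q) := by
  have : star (q : HQ) = -q := congrArg Subtype.val hq
  exact Subtype.ext (by simp [hadamard, this, offDiag, Unitary.coe_neg])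

/-- The five anticommuting involutions `Z`, `[[0, q], [q̄, 0]]` for `q = 1, i, j, k`, in order. -/
def gamma : Fin 5 → Sp2 :=
  Fin.cons pauliZ fun m ↦ offDiag (unitBasis m)

theorem offDiag_mul_offDiag_eq_neg {p q : unitary HQ} (h : inner ℝ (p : HQ) q = 0) :
    offDiag p * offDiag q = -(offDiag q * offDiag p) := by
  have h1 : (p : HQ) * star (q : HQ) = -(q * star (p : HQ)) := by
    have := Quaternion.self_add_star ((p : HQ) * star (q : HQ))
    rw [← Quaternion.inner_def, h] at this
    simpa [← eq_neg_iff_add_eq_zero] using this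
  have h2 : star (p : HQ) * (q : HQ) = -(star (q : HQ) * p) := by
    have := Quaternion.self_add_star (star (p : HQ) * (q : HQ))
    rw [re_star_mul, h] at this
    simpa [← eq_neg_iff_add_eq_zero] using this
  exact Subtype.ext (by simp [offDiag, Unitary.coe_neg, h1, h2])

theorem prod_ofFn_gamma : (List.ofFn gamma).prod = -1 := by
  have h00 : star qi * (qj * (star qj * star qi)) = -1 := by ext <;> simp
  have h11 : qi * (star qj * (qi * qj)) = 1 := by ext <;> simp
  exact Subtype.ext (by simp [gamma, unitBasis, pauliZ, offDiag, Unitary.coe_neg,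
    Matrix.one_fin_two, unitI, unitJ, h00, h11])

theorem coe_smul_eq_smul {m n : Type*} (r : ℝ) (A : Matrix m n HQ) : (r : HQ) • A = r • A := by
  ext1 i j
  exact Quaternion.coe_mul_eq_smul r (A i j)

theorem coe_hadamard_conj :
    (hadamard * diagLeft unitJ * hadamard : Sp2).1 =
      ((2 : ℝ)⁻¹ : HQ) • !![1 + qj, -1 + qj; -1 + qj, 1 + qj] := by
  rw [← Quaternion.coe_inv, coe_smul_eq_smul]
  simp [hadamard, diagLeft, unitJ, smul_smul, inv_sqrt_two_mul_self, smul_add, add_comm]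

theorem coe_hadamard :
    (hadamard : Matrix (Fin 2) (Fin 2) HQ) = (((√2)⁻¹ : ℝ) : HQ) • !![1, 1; 1, -1] :=
  (coe_smul_eq_smul _ _).symm

theorem pairwise_gamma_mul_eq_neg :
    Pairwise fun i j ↦ gamma i * gamma j = -(gamma j * gamma i) := by
  intro i j hij
  cases i using Fin.cases <;> cases j using Fin.cases
  · contradiction
  · exact pauliZ_mul_offDiag _
  · exact (neg_eq_iff_eq_neg.mpr (pauliZ_mul_offDiag _)).symm
  · exact offDiag_mul_offDiag_eq_neg (inner_unitBasis (hij <| congrArg Fin.succ ·))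

theorem coe_eq_scalar_of_commute {g : Sp2} (hZ : Commute g pauliZ) (hX : Commute g (offDiag 1)) :
    (g : Matrix (Fin 2) (Fin 2) HQ) = !![g.1 0 0, 0; 0, g.1 0 0] := by
  have : CharZero HQ := algebraRat.charZero HQ
  have h01 : g.1 0 1 = 0 := by
    have h := congrArg (fun h : Sp2 ↦ h.1 0 1) hZ.eq
    simpa [pauliZ, Matrix.mul_apply, CharZero.neg_eq_self_iff] using h
  have h10 : g.1 1 0 = 0 := by
    have h := congrArg (fun h : Sp2 ↦ h.1 1 0) hZ.eq
    simpa [pauliZ, Matrix.mul_apply, CharZero.eq_neg_self_iff] using h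
  have h11 : g.1 1 1 = g.1 0 0 := by
    have h := congrArg (fun h : Sp2 ↦ h.1 1 0) hX.eq
    simpa [offDiag, Matrix.mul_apply] using h
  rw [Matrix.eta_fin_two g.1, h01, h10, h11]
  rfl

theorem commute_apply_of_commute_offDiag {g : Sp2} (hZ : Commute g pauliZ)
    (hX : Commute g (offDiag 1)) {q : unitary HQ} (hq : Commute g (offDiag q)) :
    Commute (g.1 0 0) q := by
  have h : (g.1 * offDiag q) 0 1 = (offDiag q * g.1) 0 1 := congrArg (fun h : Sp2 ↦ h.1 0 1) hq.eq
  rw [coe_eq_scalar_of_commute hZ hX] at h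
  simpa [offDiag, Commute, SemiconjBy] using h

theorem eq_one_or_eq_neg_one_of_commute_gamma (g : Sp2) (hg : ∀ i, Commute g (gamma i)) :
    g = 1 ∨ g = -1 := by
  have hscalar := coe_eq_scalar_of_commute (hg 0) (hg 1)
  have hreal : g.1 0 0 = (g.1 0 0).re :=
    eq_coe_re_of_commute (commute_apply_of_commute_offDiag (hg 0) (hg 1) (hg 2))
      (commute_apply_of_commute_offDiag (hg 0) (hg 1) (hg 3))
  have hunit : star (g.1 0 0) * g.1 0 0 = 1 := by
    have h := congrFun₂ (Unitary.coe_star_mul_self g) 0 0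
    rw [hscalar] at h
    simpa [Matrix.mul_apply] using h
  rw [hreal, Quaternion.star_coe] at hunit
  apply (mul_self_eq_one_iff.mp hunit).imp <;> intro h <;>
    exact Subtype.ext (by rw [hscalar, hreal, h]; simp [Matrix.one_fin_two, Unitary.coe_neg])

theorem isCliffordFrame_gamma : IsCliffordFrame gamma where
  one_ne_neg_one h := by
    have h00 := congrArg (fun g : Sp2 ↦ (g.1 0 0).re) h
    norm_num [Unitary.coe_neg] at h00
  mul_self := Fin.cases pauliZ_mul_self fun _ ↦ offDiag_mul_self _
  anticomm := pairwise_gamma_mul_eq_neg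
  prod_ofFn := prod_ofFn_gamma
  eq_of_commute := eq_one_or_eq_neg_one_of_commute_gamma

open Equiv

theorem diagLeft_unitI_mem_signedPermGraph :
    (diagLeft unitI, swap 1 2 * swap 3 4) ∈ signedPermGraph gamma := by
  have h := semiconjBy_diagLeft_offDiag unitI
  have h1 : SemiconjBy (diagLeft unitI) (offDiag 1) (offDiag unitI) := by simpa using h 1
  have hI : SemiconjBy (diagLeft unitI) (offDiag unitI) (-offDiag 1) := by
    simpa [unitI_mul_self, offDiag_neg] using h unitI
  have hIJ : SemiconjBy (diagLeft unitI) (offDiag (unitI * unitJ)) (-offDiag unitJ) := by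
    simpa [← mul_assoc, unitI_mul_self, offDiag_neg] using h (unitI * unitJ)
  refine mem_signedPermGraph fun i ↦ ?_
  fin_cases i
  exacts [.inl (commute_diagLeft_pauliZ _), .inl h1, .inr hI, .inl (h unitJ), .inr hIJ]

theorem diagLeft_unitJ_mem_signedPermGraph :
    (diagLeft unitJ, swap 1 3 * swap 2 4) ∈ signedPermGraph gamma := by
  have h := semiconjBy_diagLeft_offDiag unitJ
  have h1 : SemiconjBy (diagLeft unitJ) (offDiag 1) (offDiag unitJ) := by simpa using h 1
  have hI : SemiconjBy (diagLeft unitJ) (offDiag unitI) (-offDiag (unitI * unitJ)) := by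
    simpa [unitJ_mul_unitI, offDiag_neg] using h unitI
  have hJ : SemiconjBy (diagLeft unitJ) (offDiag unitJ) (-offDiag 1) := by
    simpa [unitJ_mul_self, offDiag_neg] using h unitJ
  have hIJ : SemiconjBy (diagLeft unitJ) (offDiag (unitI * unitJ)) (offDiag unitI) := by
    have hJIJ : unitJ * (unitI * unitJ) = unitI := by
      rw [← mul_assoc, unitJ_mul_unitI, neg_mul, mul_assoc, unitJ_mul_self, mul_neg_one, neg_neg]
    simpa only [hJIJ] using h (unitI * unitJ)
  refine mem_signedPermGraph fun i ↦ ?_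
  fin_cases i
  exacts [.inl (commute_diagLeft_pauliZ _), .inl h1, .inr hI, .inr hJ, .inl hIJ]

theorem hadamard_mem_signedPermGraph : (hadamard, swap 0 1) ∈ signedPermGraph gamma := by
  have hZ := semiconjBy_hadamard_pauliZ
  have hX : SemiconjBy hadamard (offDiag 1) pauliZ := by
    have h := hZ.inv_symm_left
    rwa [inv_eq_of_mul_eq_one_right hadamard_mul_self] at h
  refine mem_signedPermGraph fun i ↦ ?_
  fin_cases i
  exacts [.inl hZ, .inl hX, .inr (semiconjBy_hadamard_offDiag star_unitI),
    .inr (semiconjBy_hadamard_offDiag star_unitJ),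
    .inr (semiconjBy_hadamard_offDiag star_unitI_mul_unitJ)]

theorem hadamard_conj_mem {K : Subgroup (Sp2 × Perm (Fin 5))}
    (hJ : (diagLeft unitJ, swap 1 3 * swap 2 4) ∈ K) (hH : (hadamard, swap 0 1) ∈ K) :
    (hadamard * diagLeft unitJ * hadamard, swap 0 3 * swap 2 4) ∈ K := by
  rw [show (swap 0 3 * swap 2 4 : Perm (Fin 5)) = swap 0 1 * (swap 1 3 * swap 2 4) * swap 0 1 by
    decide]
  have h := mul_mem (mul_mem hH hJ) hH
  rwa [Prod.mk_mul_mk, Prod.mk_mul_mk] at h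

theorem hadamard_conj_mem_signedPermGraph :
    (hadamard * diagLeft unitJ * hadamard, swap 0 3 * swap 2 4) ∈ signedPermGraph gamma :=
  hadamard_conj_mem diagLeft_unitJ_mem_signedPermGraph hadamard_mem_signedPermGraph

theorem hadamard_conj_diagLeft_unitJ_mul_self :
    hadamard * diagLeft unitJ * hadamard * (hadamard * diagLeft unitJ * hadamard) =
      -offDiag 1 := by
  calc
    _ = hadamard * (diagLeft unitJ * (hadamard * hadamard) * diagLeft unitJ) * hadamard := by
      simp only [mul_assoc]
    _ = hadamard * -pauliZ * hadamard := by
      rw [hadamard_mul_self, mul_one, ← map_mul, unitJ_mul_self, diagLeft_neg_one]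
    _ = -offDiag 1 := by
      rw [mul_neg, neg_mul, semiconjBy_hadamard_pauliZ.eq, mul_assoc, hadamard_mul_self, mul_one]

theorem range_gamma_subset_goursatFst {H : Type*} [Group H] {K : Subgroup (Sp2 × H)} {σ τ ρ : H}
    (hσ : (diagLeft unitI, σ) ∈ K) (hσσ : σ * σ = 1) (hτ : (diagLeft unitJ, τ) ∈ K)
    (hρ : (hadamard * diagLeft unitJ * hadamard, ρ) ∈ K) (hρρ : ρ * ρ = 1) :
    Set.range gamma ⊆ K.goursatFst := by
  have hZ : -pauliZ ∈ K.goursatFst := by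
    have h := mul_mem hσ hσ
    rw [Prod.mk_mul_mk, hσσ, ← map_mul, unitI_mul_self, diagLeft_neg_one] at h
    exact Subgroup.mem_goursatFst.mpr h
  have hX : -offDiag 1 ∈ K.goursatFst := by
    have h := mul_mem hρ hρ
    rw [Prod.mk_mul_mk, hρρ, hadamard_conj_diagLeft_unitJ_mul_self] at h
    exact Subgroup.mem_goursatFst.mpr h
  have hneg : -1 ∈ K.goursatFst := by
    have h := mul_mem (mul_mem hZ hX) (mul_mem hZ hX)
    rwa [neg_mul_neg, mul_mul_self_eq_neg_one pauliZ_mul_self (offDiag_mul_self 1)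
      (pauliZ_mul_offDiag 1)] at h
  have hconj {u q : unitary HQ} {ω : H} (hu : (diagLeft u, ω) ∈ K)
      (hq : offDiag q ∈ K.goursatFst) : offDiag (u * q) ∈ K.goursatFst := by
    have h := conj_mem_goursatFst hu hq
    rwa [(semiconjBy_diagLeft_offDiag u q).eq, mul_inv_cancel_right] at h
  have h0 : pauliZ ∈ K.goursatFst := by simpa using mul_mem hneg hZ
  have h1 : offDiag 1 ∈ K.goursatFst := by simpa using mul_mem hneg hX
  have h2 : offDiag unitI ∈ K.goursatFst := by simpa using hconj hσ h1
  have h3 : offDiag unitJ ∈ K.goursatFst := by simpa using hconj hτ h1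
  rintro _ ⟨i, rfl⟩
  fin_cases i
  exacts [h0, h1, h2, h3, hconj hσ h3]

theorem card_submonoid_closure {g : Sp2} {ρ : Perm (Fin 5)} (hg : (g, ρ) ∈ signedPermGraph gamma)
    (hK : (hadamard * diagLeft unitJ * hadamard, swap 0 3 * swap 2 4) ∈ Subgroup.closure
      {(diagLeft unitI, swap 1 2 * swap 3 4), (diagLeft unitJ, swap 1 3 * swap 2 4), (g, ρ)}) :
    Nat.card (Submonoid.closure {!![qi, 0; 0, 1], !![qj, 0; 0, 1], g.1}) =
      2 ^ 5 * Nat.card (Subgroup.closure {swap 1 2 * swap 3 4, swap 1 3 * swap 2 4, ρ}) := by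
  set s : Set (Sp2 × Perm (Fin 5)) :=
    {(diagLeft unitI, swap 1 2 * swap 3 4), (diagLeft unitJ, swap 1 3 * swap 2 4), (g, ρ)}
    with hs_def
  have hs : s ⊆ signedPermGraph gamma := by
    rintro _ (rfl | rfl | rfl)
    exacts [diagLeft_unitI_mem_signedPermGraph, diagLeft_unitJ_mem_signedPermGraph, hg]
  have hI : (diagLeft unitI, swap 1 2 * swap 3 4) ∈ Subgroup.closure s :=
    Subgroup.subset_closure (.inl rfl)
  have hJ : (diagLeft unitJ, swap 1 3 * swap 2 4) ∈ Subgroup.closure s :=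
    Subgroup.subset_closure (.inr (.inl rfl))
  have hrange := range_gamma_subset_goursatFst hI (by decide) hJ hK (by decide)
  have h := isCliffordFrame_gamma.card_submonoid_closure (f := (unitary _).subtype)
    Subtype.val_injective hs hrange
  simp only [hs_def, Set.image_insert_eq, Set.image_singleton] at h
  exact h

end Sp2

/-- P₂ = ⟨diag(i,1), diag(j,1), (1/2)[[1+j,−1+j],[−1+j,1+j]]⟩ has order 1920,
and P₃ = ⟨diag(i,1), diag(j,1), (1/√2)[[1,1],[1,−1]]⟩ has order 3840. -/
theorem P2_order_1920_and_P3_order_3840 :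
    Nat.card (Submonoid.closure
      {(!![qi, 0; 0, 1] : Matrix (Fin 2) (Fin 2) HQ), !![qj, 0; 0, 1],
       (((2:ℝ)⁻¹ : HQ)) • !![1 + qj, -1 + qj; -1 + qj, 1 + qj]}) = 1920 ∧
    Nat.card (Submonoid.closure
      {(!![qi, 0; 0, 1] : Matrix (Fin 2) (Fin 2) HQ), !![qj, 0; 0, 1],
       (((Real.sqrt 2)⁻¹ : ℝ) : HQ) • !![1, 1; 1, -1]}) = 3840 := by
  constructor
  · rw [← Sp2.coe_hadamard_conj, Sp2.card_submonoid_closure Sp2.hadamard_conj_mem_signedPermGraph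
      (Subgroup.subset_closure (by simp)), closure_swaps_eq_alternatingGroup,
      nat_card_alternatingGroup, Nat.card_fin]
    rfl
  · rw [← Sp2.coe_hadamard, Sp2.card_submonoid_closure Sp2.hadamard_mem_signedPermGraph
      (Sp2.hadamard_conj_mem (Subgroup.subset_closure (by simp))
        (Subgroup.subset_closure (by simp))), closure_swaps_eq_top, Subgroup.card_top,
      Nat.card_perm, Nat.card_fin]
    rfl
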